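/- arXiv:2204.01158 — 2 statements merged into one kernel-verified Lean document; each statement's English description precedes it below -/
import Mathlib

section
/- Let S be a regular system of difference fields on V over A, let u ⊆ V and let I be any collection of subsets of V. Then S(u) is linearly disjoint from ∏_{v∈I} S(v)^{alg} over ∏_{v∈I_u} S(v). (Third linear disjointness lemma for regular systems.) -/
/-- Subfields `E` and `F` of `K` containing `C` are linearly disjoint over `C`
if the multiplication map `E ⊗[C] F → K` is injective. -/
def LinearDisjointOver {K : Type*} [Field K] (C E F : Subfield K) : Prop :=
  (Submodule.span C (E : Set K)).LinearDisjoint (Submodule.span C (F : Set K))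

/-- The relative algebraic closure `E^{alg}` of a subfield `E` inside `K`. -/
def algCl {K : Type*} [Field K] (E : Subfield K) : Subfield K :=
  Subfield.closure {x : K | IsAlgebraic E x}

/-- The inversive closure `E^{inv}`: the smallest subfield of `K` containing `E`
closed under `σ` and `σ⁻¹`. -/
def invCl {K : Type*} [Field K] (σ : K ≃+* K) (E : Subfield K) : Subfield K :=
  sInf {F : Subfield K | E ≤ F ∧ (∀ x ∈ F, σ x ∈ F) ∧ ∀ x ∈ F, σ.symm x ∈ F}

/-- `E` and `F` are independent over `C`: `((E·C)^{inv})^{alg}` and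
`((F·C)^{inv})^{alg}` are linearly disjoint over `(C^{inv})^{alg}`. -/
def IndependentOver {K : Type*} [Field K] (σ : K ≃+* K) (C E F : Subfield K) : Prop :=
  LinearDisjointOver (algCl (invCl σ C)) (algCl (invCl σ (E ⊔ C))) (algCl (invCl σ (F ⊔ C)))

/-- `F ≤ E` and `E/F` is a finite Galois extension (of subfields of `K`). -/
def IsFiniteGaloisExt {K : Type*} [Field K] (F E : Subfield K) : Prop :=
  ∃ h : F ≤ E,
    letI : Algebra F E := (Subfield.inclusion h).toAlgebra
    FiniteDimensional F E ∧ IsGalois F E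

/-- `I_u = {v ∩ u : v ∈ I}`. -/
def interFamily {V : Type*} [DecidableEq V] (I : Set (Finset V)) (u : Finset V) :
    Set (Finset V) :=
  {w | ∃ v ∈ I, w = v ∩ u}

/-- A system of difference fields on `V` over `A` inside `(K, σ)`. -/
structure DiffFieldSystem {K : Type*} [Field K] (σ : K ≃+* K)
    (V : Type*) [Fintype V] [DecidableEq V] (A : Subfield K) where
  /-- the underlying map from subsets of `V` to subfields of `K` -/
  S : Finset V → Subfield K
  mono : ∀ {u v : Finset V}, u ⊆ v → S u ≤ S v
  empty_eq : S ∅ = A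
  sigma_stable : ∀ u : Finset V, ∀ x ∈ S u, σ x ∈ S u
  perfect : ∀ u : Finset V, PerfectField (S u)
  /-- each `S u` has finite transcendence degree over `A` -/
  fin_trdeg : ∀ u : Finset V, ∃ t : Finset K,
    ∀ x ∈ S u, IsAlgebraic ↥(A ⊔ Subfield.closure (t : Set K)) x
  /-- each `S u` is the perfect closure of a difference subfield generated over
  `A` by a finite set (i.e. the smallest perfect `σ`-stable subfield of `K`
  containing `A` and that finite set) -/
  fin_gen : ∀ u : Finset V, ∃ t : Finset K,
    (A ≤ S u ∧ (t : Set K) ⊆ S u) ∧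
    ∀ F : Subfield K, A ≤ F → (t : Set K) ⊆ F → (∀ x ∈ F, σ x ∈ F) →
      PerfectField F → S u ≤ F
  /-- the family `(S {i})_{i ∈ V}` is independent over `A` -/
  indep : ∀ I₁ I₂ : Finset V, Disjoint I₁ I₂ →
    IndependentOver σ A (A ⊔ ⨆ i ∈ I₁, S {i}) (A ⊔ ⨆ i ∈ I₂, S {i})
  /-- for `|u| ≥ 2`, `S u` is a finite Galois extension of
  `S(u)⁻ = ∏_{v ∈ P(u)⁻} S v` -/
  galois : ∀ u : Finset V, 2 ≤ u.card →
    IsFiniteGaloisExt (⨆ v ∈ u.powerset.erase u, S v) (S u)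

namespace DiffFieldSystem

variable {K : Type*} [Field K] {σ : K ≃+* K}
variable {V : Type*} [Fintype V] [DecidableEq V] {A : Subfield K}

/-- `S(u)⁻ = ∏_{v ∈ P(u)⁻} S(v)`. -/
def Sminus (𝒮 : DiffFieldSystem σ V A) (u : Finset V) : Subfield K :=
  ⨆ v ∈ u.powerset.erase u, 𝒮.S v

/-- `𝒮` is an `I`-system: `S u = S(u)⁻` for `u ∉ I`. -/
def IsOn (𝒮 : DiffFieldSystem σ V A) (I : Set (Finset V)) : Prop :=
  ∀ u : Finset V, u ∉ I → 𝒮.S u = 𝒮.Sminus u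

/-- `𝒮` is regular: for every nonempty `u`, `S u` is linearly disjoint from
`∏_{v ∈ P(u)⁻} S(v)^{alg}` over `∏_{v ∈ P(u)⁻} S(v)`. -/
def Regular (𝒮 : DiffFieldSystem σ V A) : Prop :=
  ∀ u : Finset V, u ≠ ∅ →
    LinearDisjointOver (𝒮.Sminus u) (𝒮.S u) (⨆ v ∈ u.powerset.erase u, algCl (𝒮.S v))

end DiffFieldSystem

/-- `I` is a simplicial complex on `V`: downward closed with union all of `V`. -/
def IsSimplicialComplexOn (V : Type*) [DecidableEq V] (I : Set (Finset V)) : Prop :=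
  (∀ u ∈ I, ∀ v : Finset V, v ⊆ u → v ∈ I) ∧ ∀ i : V, ∃ u ∈ I, i ∈ u

/-!
Let `k` be algebraically closed and `L`, `M` linearly disjoint over `k`. By the Nullstellensatz,
finitely generated `k`-subalgebras of `M` have points in `k`, so `M` embeds over `k` into an
ultrapower `k*`. Together with the constants `L ⊆ L*`, this embeds `L ⊗[k] M` into `K*`, and `K` can
be amalgamated with `K*` over `L ⊗[k] M`. In the amalgam, if `k ⊆ D ⊆ L` with `D` algebraically
closed, then `(D M)^{alg}` goes into the algebraically closed field `D*`. Hence a compositum of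
fields `B_i ⊆ (D_i M)^{alg}` goes into `(∏ D_i)*`, over which constants that are linearly
independent over `∏ D_i` stay independent; so `L` and `∏ B_i` are linearly disjoint over `∏ D_i`.

Applied to `k = A^{alg}`, `L = S(w)^{alg}` and `M = S(V ∖ w)^{alg}`, this shows that `S(w)^{alg}` is
linearly disjoint from `∏_{v ∈ J} S(v)^{alg}` over `∏_{v ∈ J} S(v ∩ w)^{alg}`. For `J` downward
closed with `w ∉ J` but all proper subsets of `w` in `J`, regularity brings the base down to
`S(w)⁻`. The theorem follows by removing from the subsets of `u`, one maximal element at a time,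
those not contained in a member of `I`.
-/

universe u v w

section Basis

variable {K ι : Type*} [Field K] {C D E : Subfield K}

theorem linearIndependent_coe_of_basis (hE : C ≤ E)
    (b : Module.Basis ι C (Subfield.extendScalars hE)) :
    LinearIndependent C (fun i ↦ (b i : K)) :=
  b.linearIndependent.map' (Subfield.extendScalars hE).val.toLinearMap
    (LinearMap.ker_eq_bot.2 Subtype.val_injective)

theorem span_range_basis_eq_adjoin (hCE : C ≤ E) (hCD : C ≤ D)
    (b : Module.Basis ι C (Subfield.extendScalars hCE)) :
    Submodule.span D (Set.range fun i ↦ (b i : K)) =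
      Subalgebra.toSubmodule (Algebra.adjoin D (E : Set K)) := by
  have hE : Submonoid.closure (E : Set K) = E.toSubmonoid := Submonoid.closure_eq E.toSubmonoid
  rw [Algebra.adjoin_eq_span, hE]
  refine le_antisymm (Submodule.span_mono (Set.range_subset_iff.2 fun i ↦ (b i).2))
    (Submodule.span_le.2 fun x hx ↦ ?_)
  let c := b.repr ⟨x, hx⟩
  have hx_eq : ∑ i ∈ c.support, (c i : K) * (b i : K) = x := by
    have hsum : ∑ i ∈ c.support, c i • b i = ⟨x, hx⟩ := b.linearCombination_repr ⟨x, hx⟩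
    exact (AddSubmonoidClass.coe_finsetSum _ _).symm.trans (congrArg Subtype.val hsum)
  rw [← hx_eq]
  exact sum_mem fun i _ ↦ Submodule.smul_mem _ (⟨c i, hCD (c i).2⟩ : D)
    (Submodule.subset_span ⟨i, rfl⟩)

end Basis

namespace LinearDisjointOver

variable {K : Type u} [Field K] {C D E F : Subfield K}

theorem iff_extendScalars (hE : C ≤ E) (hF : C ≤ F) :
    LinearDisjointOver C E F ↔
      (Subfield.extendScalars hE).LinearDisjoint (Subfield.extendScalars hF) := by
  have span_eq {E : Subfield K} (h : C ≤ E) : Submodule.span C (E : Set K) =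
      Subalgebra.toSubmodule (Subfield.extendScalars h).toSubalgebra :=
    Submodule.span_eq (Subalgebra.toSubmodule (Subfield.extendScalars h).toSubalgebra)
  rw [IntermediateField.linearDisjoint_iff', Subalgebra.LinearDisjoint, LinearDisjointOver,
    span_eq hE, span_eq hF]

theorem symm (h : LinearDisjointOver C E F) : LinearDisjointOver C F E :=
  Submodule.LinearDisjoint.symm h

theorem mono {E' F' : Subfield K} (h : LinearDisjointOver C E F) (hE : E' ≤ E) (hF : F' ≤ F) :
    LinearDisjointOver C E' F' :=
  Submodule.LinearDisjoint.of_le_of_flat_right h (Submodule.span_mono hE) (Submodule.span_mono hF)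

theorem of_le_base (h : E ≤ C) : LinearDisjointOver C E F :=
  Submodule.LinearDisjoint.of_left_le_one_of_flat _ _ <| Submodule.span_le.2 fun x hx ↦
    Submodule.mem_one.2 ⟨⟨x, h hx⟩, rfl⟩

theorem linearIndependent (h : LinearDisjointOver C E F) (hE : C ≤ E) (hF : C ≤ F) {ι : Type*}
    {e : ι → K} (he : ∀ i, e i ∈ E) (hli : LinearIndependent C e) : LinearIndependent F e :=
  ((iff_extendScalars hE hF).1 h).linearIndependent_left
    (a := fun i ↦ (⟨e i, he i⟩ : Subfield.extendScalars hE))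
    (hli.of_comp (Subfield.extendScalars hE).val.toLinearMap)

theorem of_linearIndependent (hE : C ≤ E) (hF : C ≤ F)
    (H : ∀ {ι : Type u} (e : ι → K), (∀ i, e i ∈ E) → LinearIndependent C e →
      LinearIndependent F e) :
    LinearDisjointOver C E F := by
  let b := Module.Basis.ofVectorSpace C (Subfield.extendScalars hE)
  exact (iff_extendScalars hE hF).2 <| .of_basis_left b <|
    H _ (fun i ↦ (b i).2) (linearIndependent_coe_of_basis hE b)

theorem trans (hCD : C ≤ D) (hCE : C ≤ E) (hDF : D ≤ F) (h : LinearDisjointOver C E D)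
    (h' : LinearDisjointOver D (E ⊔ D) F) : LinearDisjointOver C E F :=
  of_linearIndependent hCE (hCD.trans hDF) fun _ he hli ↦
    h'.linearIndependent le_sup_right hDF (fun i ↦ (le_sup_left : E ≤ E ⊔ D) (he i))
      (h.linearIndependent hCE hCD he hli)

theorem linearDisjoint_adjoin (hCE : C ≤ E) (hCD : C ≤ D) (hDF : D ≤ F)
    (h : LinearDisjointOver C E F) :
    (Algebra.adjoin D (E : Set K)).LinearDisjoint (Subfield.extendScalars hDF).toSubalgebra := by
  let b := Module.Basis.ofVectorSpace C (Subfield.extendScalars hCE)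
  have hbF : LinearIndependent F (fun i ↦ (b i : K)) :=
    h.linearIndependent hCE (hCD.trans hDF) (fun i ↦ (b i).2) (linearIndependent_coe_of_basis hCE b)
  have hbD : LinearIndependent D (fun i ↦ (b i : K)) :=
    (h.mono le_rfl hDF).linearIndependent hCE hCD (fun i ↦ (b i).2)
      (linearIndependent_coe_of_basis hCE b)
  let bD : Module.Basis _ D (Algebra.adjoin D (E : Set K)) :=
    (Module.Basis.span hbD).map (LinearEquiv.ofEq _ _ (span_range_basis_eq_adjoin hCE hCD b))
  refine .of_basis_left _ _ bD ?_
  have hbD_val : (Algebra.adjoin D (E : Set K)).val ∘ bD = fun i ↦ (b i : K) :=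
    funext fun i ↦ congrArg Subtype.val (Module.Basis.span_apply hbD i)
  rw [hbD_val]
  exact hbF

theorem sup_of_le (hCE : C ≤ E) (hCD : C ≤ D) (hDF : D ≤ F) (h : LinearDisjointOver C E F) :
    LinearDisjointOver D (E ⊔ D) F := by
  have hsup : E ⊔ D = (IntermediateField.adjoin D (E : Set K)).toSubfield := by
    have hrange : Set.range (algebraMap D K) = D := Subtype.range_val
    rw [IntermediateField.adjoin_toSubfield, hrange, Subfield.closure_union, Subfield.closure_eq,
      Subfield.closure_eq, sup_comm]
  open scoped IntermediateField.algebraAdjoinAdjoin in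
  refine (of_linearIndependent hDF le_sup_right fun f hf hli ↦ ?_).symm
  have hadjoin : LinearIndependent (Algebra.adjoin D (E : Set K)) f :=
    (h.linearDisjoint_adjoin hCE hCD hDF).linearIndependent_right_of_flat
      (b := fun i ↦ ⟨f i, hf i⟩) (hli.of_comp (Subfield.extendScalars hDF).val.toLinearMap)
  rw [hsup]
  exact (LinearIndependent.iff_fractionRing _ (IntermediateField.adjoin D (E : Set K))).1 hadjoin

end LinearDisjointOver

section algCl

variable {K Ω : Type*} [Field K] [Field Ω] {E F : Subfield K}

theorem algCl_eq_toSubfield (E : Subfield K) : algCl E = (algebraicClosure E K).toSubfield := by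
  refine le_antisymm (Subfield.closure_le.2 fun x hx ↦ ?_) fun x hx ↦ Subfield.subset_closure ?_
  · exact mem_algebraicClosure_iff.2 hx
  · exact mem_algebraicClosure_iff.1 hx

theorem mem_algCl {x : K} : x ∈ algCl E ↔ IsAlgebraic E x := by
  rw [algCl_eq_toSubfield]
  exact mem_algebraicClosure_iff

theorem le_algCl (E : Subfield K) : E ≤ algCl E := fun x hx ↦
  mem_algCl.2 (isAlgebraic_algebraMap (⟨x, hx⟩ : E))

theorem map_algCl_le (φ : K →+* Ω) : (algCl E).map φ ≤ algCl (E.map φ) := by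
  rintro _ ⟨x, hx, rfl⟩
  let φE : E →+* E.map φ := φ.restrict E (E.map φ) fun y hy ↦ ⟨y, hy, rfl⟩
  exact mem_algCl.2 <| (mem_algCl.1 hx).ringHom_of_comp_eq φE φ φE.injective rfl

theorem algCl_mono (h : E ≤ F) : algCl E ≤ algCl F := fun _ hx ↦
  mem_algCl.2 <| (mem_algCl.1 hx).ringHom_of_comp_eq (Subfield.inclusion h) (RingHom.id K)
    (Subfield.inclusion h).injective rfl

theorem algCl_le (h : E ≤ algCl F) : algCl E ≤ algCl F := by
  rw [algCl_eq_toSubfield F] at h ⊢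
  exact fun x hx ↦ mem_algebraicClosure_iff.2 <|
    (show IsAlgebraic (algebraicClosure F K) x from mem_algCl.1 (algCl_mono h hx)).restrictScalars F

theorem algCl_eq_self (E : Subfield K) [IsAlgClosed E] : algCl E = E := by
  rw [algCl_eq_toSubfield,
    IntermediateField.eq_bot_of_isAlgClosed_of_isAlgebraic (algebraicClosure E K),
    IntermediateField.bot_toSubfield]
  exact E.fieldRange_subtype

instance isAlgClosed_algCl [IsAlgClosed K] (E : Subfield K) : IsAlgClosed (algCl E) := by
  rw [algCl_eq_toSubfield]
  exact IsAlgClosure.isAlgClosed E (K := algebraicClosure E K)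

theorem isAlgClosed_map (φ : K →+* Ω) (E : Subfield K) [IsAlgClosed E] :
    IsAlgClosed (E.map φ) where
  splits p := by
    let φE : E →+* E.map φ := φ.restrict E (E.map φ) fun y hy ↦ ⟨y, hy, rfl⟩
    have hφE : Function.Surjective φE := fun ⟨_, x, hx, h⟩ ↦ ⟨⟨x, hx⟩, Subtype.ext h⟩
    obtain ⟨q, rfl⟩ := Polynomial.map_surjective φE hφE p
    exact IsAlgClosed.splits_domain q

end algCl

section LinearIndependent

variable {K Ω ι : Type*} [Field K] [Field Ω] {E : Subfield K} {e : ι → K}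

theorem linearIndependent_map_subfield (φ : K →+* Ω) (he : LinearIndependent E e) :
    LinearIndependent (E.map φ) (φ ∘ e) := by
  refine he.map_of_surjective_injective (φ.restrict E (E.map φ) fun y hy ↦ ⟨y, hy, rfl⟩)
    φ.toAddMonoidHom ?_ (fun _ ↦ (map_eq_zero φ).1) fun r m ↦ ?_
  · rintro ⟨_, x, hx, rfl⟩
    exact ⟨⟨x, hx⟩, rfl⟩
  · exact map_mul φ _ _

theorem linearIndependent_of_map_le {φ : K →+* Ω} {F : Subfield Ω} (hφ : E.map φ ≤ F)
    (he : LinearIndependent F (φ ∘ e)) : LinearIndependent E e := by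
  rw [linearIndependent_iff'] at he ⊢
  intro s g hg i hi
  let φE : E →+* F := φ.restrict E F fun y hy ↦ hφ ⟨y, hy, rfl⟩
  refine φE.injective ((he s (φE ∘ g) ?_ i hi).trans (map_zero φE).symm)
  calc ∑ j ∈ s, (φE ∘ g) j • (φ ∘ e) j = φ (∑ j ∈ s, g j • e j) := by
        rw [map_sum]
        exact Finset.sum_congr rfl fun j _ ↦ (map_mul φ (g j : K) (e j)).symm
    _ = 0 := by rw [hg, map_zero]

end LinearIndependent

/-! ### Ultrapowers of fields -/

/-- The ultrapower of `K` with respect to the ultrafilter `𝒰`. -/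
abbrev Ultrapower {α : Type*} (𝒰 : Ultrafilter α) (K : Type*) : Type _ :=
  (𝒰 : Filter α).Germ K

namespace Ultrapower

open Filter Polynomial

variable {α : Type*} (𝒰 : Ultrafilter α)

section Algebra

variable {R A B : Type*} [CommSemiring R] [CommSemiring A] [CommSemiring B]
  [Algebra R A] [Algebra R B]

instance : Algebra R (Ultrapower 𝒰 A) :=
  Algebra.ofModule
    (fun r x y ↦ Germ.inductionOn₂ x y fun f g ↦
      congrArg Germ.ofFun (funext fun a ↦ smul_mul_assoc r (f a) (g a)))
    (fun r x y ↦ Germ.inductionOn₂ x y fun f g ↦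
      congrArg Germ.ofFun (funext fun a ↦ mul_smul_comm r (f a) (g a)))

theorem algebraMap_apply (r : R) :
    algebraMap R (Ultrapower 𝒰 A) r = ((algebraMap R A r : A) : Ultrapower 𝒰 A) :=
  congrArg Germ.ofFun (funext fun _ ↦ (Algebra.algebraMap_eq_smul_one r).symm)

/-- The homomorphism of ultrapowers that applies `f` coordinatewise. -/
def mapAlgHom (f : A →ₐ[R] B) : Ultrapower 𝒰 A →ₐ[R] Ultrapower 𝒰 B where
  toFun := Germ.map f
  map_one' := congrArg Germ.ofFun (funext fun _ ↦ map_one f)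
  map_mul' x y := Germ.inductionOn₂ x y fun g h ↦
    congrArg Germ.ofFun (funext fun a ↦ map_mul f (g a) (h a))
  map_zero' := congrArg Germ.ofFun (funext fun _ ↦ map_zero f)
  map_add' x y := Germ.inductionOn₂ x y fun g h ↦
    congrArg Germ.ofFun (funext fun a ↦ map_add f (g a) (h a))
  commutes' r := by
    simp only [algebraMap_apply, Germ.map_const, AlgHom.commutes]

end Algebra

section Subfield

variable {K : Type*} [Field K] {D E : Subfield K}

/-- The ultrapower of a subfield `D` of `K`, as a subfield of the ultrapower of `K`. -/
def subfield (D : Subfield K) : Subfield (Ultrapower 𝒰 K) where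
  carrier := {x | x.LiftPred (· ∈ D)}
  one_mem' := Germ.liftPred_const (one_mem D)
  zero_mem' := Germ.liftPred_const (zero_mem D)
  mul_mem' {x y} := Germ.inductionOn₂ x y fun _ _ hf hg ↦ hf.mp (hg.mono fun _ h h' ↦ mul_mem h' h)
  add_mem' {x y} := Germ.inductionOn₂ x y fun _ _ hf hg ↦ hf.mp (hg.mono fun _ h h' ↦ add_mem h' h)
  neg_mem' {x} := Germ.inductionOn x fun _ hf ↦ hf.mono fun _ ↦ neg_mem
  inv_mem' x := Germ.inductionOn x fun _ hf ↦ hf.mono fun _ ↦ inv_mem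

variable {𝒰}

theorem coe_mem_subfield {f : α → K} :
    (f : Ultrapower 𝒰 K) ∈ subfield 𝒰 D ↔ ∀ᶠ a in 𝒰, f a ∈ D := by
  rfl

theorem const_mem_subfield {x : K} (hx : x ∈ D) : (x : Ultrapower 𝒰 K) ∈ subfield 𝒰 D :=
  coe_mem_subfield.2 (.of_forall fun _ ↦ hx)

theorem subfield_mono (h : D ≤ E) : subfield 𝒰 D ≤ subfield 𝒰 E :=
  fun x ↦ Germ.inductionOn x fun _ hf ↦ coe_mem_subfield.2 <|
    (coe_mem_subfield.1 hf).mono fun _ hfa ↦ h hfa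

/-- The homomorphism sending a family of elements of `D` to its class in the ultrapower. -/
def toSubfield : (α → D) →+* subfield 𝒰 D :=
  ((Germ.coeRingHom (𝒰 : Filter α)).comp (D.subtype.compLeft α)).codRestrict _
    fun c ↦ coe_mem_subfield.2 (.of_forall fun a ↦ (c a).2)

theorem toSubfield_surjective : Function.Surjective (toSubfield : (α → D) →+* subfield 𝒰 D) := by
  classical
  rintro ⟨x, hx⟩
  induction x using Germ.inductionOn with | _ f
  refine ⟨fun a ↦ if h : f a ∈ D then ⟨f a, h⟩ else 0, Subtype.ext (Germ.coe_eq.2 ?_)⟩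
  filter_upwards [coe_mem_subfield.1 hx] with a ha
  simp [ha]

theorem linearIndependent_const {ι : Type*} {e : ι → K} (he : LinearIndependent D e) :
    LinearIndependent (subfield 𝒰 D) (fun i ↦ (e i : Ultrapower 𝒰 K)) := by
  rw [linearIndependent_iff'] at he ⊢
  intro s g hg i hi
  choose c hc using fun j ↦ toSubfield_surjective (g j)
  have hsum : Germ.coeRingHom (𝒰 : Filter α) (∑ j ∈ s, fun a ↦ c j a • e j) =
      Germ.coeRingHom (𝒰 : Filter α) 0 := by
    rw [map_sum, map_zero, ← hg]
    exact Finset.sum_congr rfl fun j _ ↦ hc j ▸ rfl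
  rw [← hc i, ← map_zero toSubfield]
  refine Subtype.ext (Germ.coe_eq.2 ?_)
  filter_upwards [Germ.coe_eq.1 hsum] with a ha
  exact congrArg Subtype.val (he s (c · a) (by simpa using ha) i hi)

theorem isAlgClosed_subfield [IsAlgClosed D] : IsAlgClosed (subfield 𝒰 D) := by
  refine .of_exists_root _ fun p hp hirr ↦ ?_
  obtain ⟨q, rfl, hdeg, hq⟩ := lifts_and_natDegree_eq_and_monic
    (mem_lifts_of_surjective toSubfield_surjective p) hp
  have hroot (a : α) : ∃ r : D, (q.map (Pi.evalRingHom _ a)).eval r = 0 := by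
    refine IsAlgClosed.exists_root _ (degree_ne_of_natDegree_ne ?_)
    rw [hq.natDegree_map, hdeg]
    exact hirr.natDegree_pos.ne'
  choose r hr using hroot
  have hqr : q.eval r = 0 :=
    funext fun a ↦ (eval_map_apply (Pi.evalRingHom _ a) r).symm.trans (hr a)
  exact ⟨toSubfield r, by rw [eval_map_apply, hqr, map_zero]⟩

end Subfield

end Ultrapower

theorem exists_algHom_of_finiteType (k R : Type*) [Field k] [IsAlgClosed k] [CommRing R]
    [Nontrivial R] [Algebra k R] [Algebra.FiniteType k R] : Nonempty (R →ₐ[k] k) := by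
  obtain ⟨m, hm⟩ := Ideal.exists_maximal R
  let := Ideal.Quotient.field m
  have := finite_of_finite_type_of_isJacobsonRing k (R ⧸ m)
  have hbij : Function.Bijective (algebraMap k (R ⧸ m)) :=
    IsAlgClosed.algebraMap_bijective_of_isIntegral
  exact ⟨((AlgEquiv.ofBijective (Algebra.ofId k (R ⧸ m)) hbij).symm : (R ⧸ m) →ₐ[k] k).comp
    (Ideal.Quotient.mkₐ k m)⟩

namespace Ultrapower

open Filter

theorem exists_algHom_of_adjoin_finset {R A B : Type*} [CommSemiring R] [CommSemiring A]
    [CommSemiring B] [Algebra R A] [Algebra R B]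
    (H : ∀ s : Finset A, Nonempty (Algebra.adjoin R (s : Set A) →ₐ[R] B)) :
    ∃ 𝒰 : Ultrafilter (Finset A), Nonempty (A →ₐ[R] Ultrapower 𝒰 B) := by
  classical
  let f (s : Finset A) : Algebra.adjoin R (s : Set A) →ₐ[R] B := (H s).some
  let F (x : A) (s : Finset A) : B :=
    if hx : x ∈ Algebra.adjoin R (s : Set A) then f s ⟨x, hx⟩ else 0
  have hF {s : Finset A} {x : A} (hx : x ∈ Algebra.adjoin R (s : Set A)) :
      F x s = f s ⟨x, hx⟩ := dif_pos hx
  let 𝒰 : Ultrafilter (Finset A) := .of atTop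
  have hmem (x : A) : ∀ᶠ s : Finset A in 𝒰, x ∈ Algebra.adjoin R (s : Set A) :=
    Ultrafilter.of_le _ <| (eventually_ge_atTop ({x} : Finset A)).mono fun s hs ↦
      Algebra.subset_adjoin (hs (Finset.mem_singleton_self x))
  have map_algebraMap (r : R) : Germ.ofFun (F (algebraMap R A r)) =
      algebraMap R (Ultrapower 𝒰 B) r := by
    rw [algebraMap_apply]
    exact congrArg Germ.ofFun <| funext fun s ↦ (hF (algebraMap_mem _ r)).trans ((f s).commutes r)
  refine ⟨𝒰, ⟨{
    toFun := fun x ↦ (F x : Germ _ B)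
    map_one' := by simpa only [map_one] using map_algebraMap 1
    map_zero' := by simpa only [map_zero] using map_algebraMap 0
    map_mul' := fun x y ↦ Germ.coe_eq.2 <| by
      filter_upwards [hmem x, hmem y] with s hx hy
      rw [hF hx, hF hy, hF (mul_mem hx hy)]
      exact map_mul (f s) ⟨x, hx⟩ ⟨y, hy⟩
    map_add' := fun x y ↦ Germ.coe_eq.2 <| by
      filter_upwards [hmem x, hmem y] with s hx hy
      rw [hF hx, hF hy, hF (add_mem hx hy)]
      exact map_add (f s) ⟨x, hx⟩ ⟨y, hy⟩
    commutes' := map_algebraMap }⟩⟩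

theorem exists_algHom_of_isAlgClosed (k R : Type*) [Field k] [IsAlgClosed k] [CommRing R]
    [Nontrivial R] [Algebra k R] :
    ∃ 𝒰 : Ultrafilter (Finset R), Nonempty (R →ₐ[k] Ultrapower 𝒰 k) :=
  exists_algHom_of_adjoin_finset fun s ↦
    have := Algebra.FiniteType.adjoin_of_finite (R := k) s.finite_toSet
    exists_algHom_of_finiteType k _

end Ultrapower

theorem exists_field_amalgam {T : Type*} {K : Type v} {E : Type w} [CommRing T]
    [Field K] [Field E] (a : T →+* K) (b : T →+* E) (ha : Function.Injective a)
    (hb : Function.Injective b) :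
    ∃ (Ω : Type (max v w)) (_ : Field Ω) (φ : K →+* Ω) (ψ : E →+* Ω), ∀ t, φ (a t) = ψ (b t) := by
  have := ha.isDomain a
  let := a.toAlgebra
  let := b.toAlgebra
  have : FaithfulSMul T K := (faithfulSMul_iff_algebraMap_injective T K).2 ha
  have : FaithfulSMul T E := (faithfulSMul_iff_algebraMap_injective T E).2 hb
  let := FractionRing.liftAlgebra T K
  let := FractionRing.liftAlgebra T E
  open scoped TensorProduct in
  obtain ⟨m, hm⟩ := Ideal.exists_maximal (K ⊗[FractionRing T] E)
  let π := Ideal.Quotient.mkₐ (FractionRing T) m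
  let φ := π.comp Algebra.TensorProduct.includeLeft
  let ψ := π.comp Algebra.TensorProduct.includeRight
  refine ⟨_, Ideal.Quotient.field m, φ, ψ, fun t ↦ ?_⟩
  have haT : a t = algebraMap (FractionRing T) K (algebraMap T (FractionRing T) t) :=
    IsScalarTower.algebraMap_apply T (FractionRing T) K t
  have hbT : b t = algebraMap (FractionRing T) E (algebraMap T (FractionRing T) t) :=
    IsScalarTower.algebraMap_apply T (FractionRing T) E t
  rw [haT, hbT]
  exact (φ.commutes _).trans (ψ.commutes _).symm

theorem productMap_injective_of_linearDisjoint_range {R A B S : Type*} [CommRing R] [CommRing A]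
    [CommRing B] [CommRing S] [Algebra R A] [Algebra R B] [Algebra R S] {f : A →ₐ[R] S}
    {g : B →ₐ[R] S} (hf : Function.Injective f) (hg : Function.Injective g)
    (h : f.range.LinearDisjoint g.range) :
    Function.Injective (Algebra.TensorProduct.productMap f g) := by
  let e := Algebra.TensorProduct.congr (AlgEquiv.ofInjective f hf) (AlgEquiv.ofInjective g hg)
  have he : Algebra.TensorProduct.productMap f g =
      (f.range.mulMap g.range).comp (e : _ →ₐ[R] _) := by
    ext <;> simp [e]
  rw [he]
  exact h.injective.comp e.injective

theorem exists_field_amalgam_of_linearDisjoint {k L M : Type*} {K : Type v} {E : Type w}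
    [Field k] [Field L] [Field M] [Field K] [Field E]
    [Algebra k L] [Algebra k M] [Algebra k K] [Algebra k E]
    {f : L →ₐ[k] K} {g : M →ₐ[k] K} (h : f.range.LinearDisjoint g.range)
    {f' : L →ₐ[k] E} {g' : M →ₐ[k] E} (h' : f'.range.LinearDisjoint g'.range) :
    ∃ (Ω : Type (max v w)) (_ : Field Ω) (φ : K →+* Ω) (ψ : E →+* Ω),
      (∀ x, φ (f x) = ψ (f' x)) ∧ ∀ y, φ (g y) = ψ (g' y) := by
  open Algebra.TensorProduct in
  obtain ⟨Ω, _, φ, ψ, hφψ⟩ := exists_field_amalgam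
    (productMap f g).toRingHom (productMap f' g').toRingHom
    (productMap_injective_of_linearDisjoint_range f.injective g.injective h)
    (productMap_injective_of_linearDisjoint_range f'.injective g'.injective h')
  exact ⟨Ω, _, φ, ψ, fun x ↦ by simpa using hφψ (x ⊗ₜ 1), fun y ↦ by simpa using hφψ (1 ⊗ₜ y)⟩

namespace Ultrapower

theorem mapAlgHom_ofId_mem_subfield {α K : Type*} {𝒰 : Ultrafilter α} [Field K] {D : Subfield K}
    (x : Ultrapower 𝒰 D) : mapAlgHom 𝒰 (Algebra.ofId D K) x ∈ subfield 𝒰 D :=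
  Filter.Germ.inductionOn x fun f ↦ coe_mem_subfield.2 (.of_forall fun a ↦ (f a).2)

theorem linearDisjoint_range {α K M : Type*} {𝒰 : Ultrafilter α} [Field K] [Field M]
    {k L : Subfield K} [Algebra k M] {hkL : k ≤ L}
    {f : Subfield.extendScalars hkL →ₐ[k] Ultrapower 𝒰 K} {g : M →ₐ[k] Ultrapower 𝒰 K}
    (hf : ∀ x, f x = ((x : K) : Ultrapower 𝒰 K)) (hg : ∀ y, g y ∈ subfield 𝒰 k) :
    f.range.LinearDisjoint g.range := by
  let b := Module.Basis.ofVectorSpace k (Subfield.extendScalars hkL)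
  refine .of_basis_left _ _ (b.map (AlgEquiv.ofInjective f f.injective).toLinearEquiv) ?_
  have hb : LinearIndependent (subfield 𝒰 k) (fun i ↦ f (b i)) := by
    simp only [hf]
    exact linearIndependent_const (linearIndependent_coe_of_basis hkL b)
  have hgk : g.fieldRange.toSubfield.map (RingHom.id _) ≤ subfield 𝒰 k := by
    rintro _ ⟨_, ⟨y, rfl⟩, rfl⟩
    exact hg y
  exact linearIndependent_of_map_le hgk hb

theorem exists_amalgam {K : Type u} [Field K] {k L M : Subfield K} [IsAlgClosed k]
    (hkL : k ≤ L) (hkM : k ≤ M) (h : LinearDisjointOver k L M) :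
    ∃ (α : Type u) (𝒰 : Ultrafilter α) (Ω : Type u) (_ : Field Ω) (φ : K →+* Ω)
      (ψ : Ultrapower 𝒰 K →+* Ω),
      (∀ x ∈ L, φ x = ψ (x : Ultrapower 𝒰 K)) ∧ M.map φ ≤ (subfield 𝒰 k).map ψ := by
  obtain ⟨𝒰, ⟨ρ⟩⟩ := exists_algHom_of_isAlgClosed k (Subfield.extendScalars hkM)
  let c : K →ₐ[k] Ultrapower 𝒰 K := (Algebra.ofId K (Ultrapower 𝒰 K)).restrictScalars k
  let f := c.comp (Subfield.extendScalars hkL).val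
  let g := (mapAlgHom 𝒰 (Algebra.ofId k K)).comp ρ
  have hf (x) : f x = ((x : K) : Ultrapower 𝒰 K) := algebraMap_apply 𝒰 (x : K)
  have hg (y) : g y ∈ subfield 𝒰 k := mapAlgHom_ofId_mem_subfield (ρ y)
  rw [LinearDisjointOver.iff_extendScalars hkL hkM, IntermediateField.linearDisjoint_iff',
    ← IntermediateField.range_val, ← IntermediateField.range_val] at h
  obtain ⟨Ω, _, φ, ψ, hL, hM⟩ :=
    exists_field_amalgam_of_linearDisjoint h (linearDisjoint_range hf hg)
  refine ⟨_, 𝒰, Ω, inferInstance, φ, ψ, fun x hx ↦ ?_, ?_⟩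
  · exact (hL ⟨x, hx⟩).trans (congrArg ψ (hf ⟨x, hx⟩))
  · rintro _ ⟨y, hy, rfl⟩
    exact ⟨_, hg ⟨y, hy⟩, (hM ⟨y, hy⟩).symm⟩

end Ultrapower

theorem LinearDisjointOver.iSup_of_le_algCl {K : Type u} [Field K] {k L M : Subfield K}
    [IsAlgClosed k] (hkL : k ≤ L) (hkM : k ≤ M) (h : LinearDisjointOver k L M) {ι : Type*}
    {D B : ι → Subfield K} [∀ i, IsAlgClosed (D i)] (hkD : ∀ i, k ≤ D i) (hDL : ∀ i, D i ≤ L)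
    (hDB : ∀ i, D i ≤ B i) (hB : ∀ i, B i ≤ algCl (D i ⊔ M)) :
    LinearDisjointOver (⨆ i, D i) L (⨆ i, B i) := by
  obtain ⟨α, 𝒰, Ω, _, φ, ψ, hL, hM⟩ := Ultrapower.exists_amalgam hkL hkM h
  have mapψ_mono {E F : Subfield K} (hEF : E ≤ F) :
      (Ultrapower.subfield 𝒰 E).map ψ ≤ (Ultrapower.subfield 𝒰 F).map ψ :=
    (Subfield.gc_map_comap ψ).monotone_l (Ultrapower.subfield_mono hEF)
  have hBi (i) : (B i).map φ ≤ (Ultrapower.subfield 𝒰 (D i)).map ψ := by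
    have := Ultrapower.isAlgClosed_subfield (𝒰 := 𝒰) (D := D i)
    have := isAlgClosed_map ψ (Ultrapower.subfield 𝒰 (D i))
    have hDi : (D i).map φ ≤ (Ultrapower.subfield 𝒰 (D i)).map ψ := by
      rintro _ ⟨x, hx, rfl⟩
      exact ⟨x, Ultrapower.const_mem_subfield hx, (hL x (hDL i hx)).symm⟩
    calc (B i).map φ ≤ (algCl (D i ⊔ M)).map φ := (Subfield.gc_map_comap φ).monotone_l (hB i)
      _ ≤ algCl ((D i ⊔ M).map φ) := map_algCl_le φ
      _ ≤ algCl ((Ultrapower.subfield 𝒰 (D i)).map ψ) := by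
        rw [Subfield.map_sup]
        exact algCl_mono (sup_le hDi (hM.trans (mapψ_mono (hkD i))))
      _ = (Ultrapower.subfield 𝒰 (D i)).map ψ := algCl_eq_self _
  have hBsup : (⨆ i, B i).map φ ≤ (Ultrapower.subfield 𝒰 (⨆ i, D i)).map ψ := by
    rw [Subfield.map_iSup]
    exact iSup_le fun i ↦ (hBi i).trans (mapψ_mono (le_iSup D i))
  refine of_linearIndependent (iSup_le hDL) (iSup_mono hDB) fun e he hli ↦ ?_
  have heφ : φ ∘ e = ψ ∘ fun i ↦ (e i : Ultrapower 𝒰 K) := funext fun i ↦ hL (e i) (he i)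
  refine linearIndependent_of_map_le hBsup ?_
  rw [heφ]
  exact linearIndependent_map_subfield ψ (Ultrapower.linearIndependent_const hli)

/-! ### Systems of difference fields -/

theorem le_invCl {K : Type*} [Field K] (σ : K ≃+* K) (E : Subfield K) : E ≤ invCl σ E :=
  le_sInf fun _ hF ↦ hF.1

theorem invCl_eq_self {K : Type*} [Field K] {σ : K ≃+* K} {E : Subfield K}
    (hE : E.map (σ : K →+* K) = E) : invCl σ E = E := by
  refine le_antisymm (sInf_le ⟨le_rfl, fun x hx ↦ ?_, fun x hx ↦ ?_⟩) (le_invCl σ E)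
  · exact hE.le ⟨x, hx, rfl⟩
  · obtain ⟨y, hy, rfl⟩ := hE.ge hx
    simpa using hy

theorem IsFiniteGaloisExt.le_algCl {K : Type*} [Field K] {E F : Subfield K}
    (h : IsFiniteGaloisExt F E) : E ≤ algCl F := by
  obtain ⟨hle, hfin, -⟩ := h
  let : Algebra F E := (Subfield.inclusion hle).toAlgebra
  have : IsScalarTower F E K := .of_algebraMap_eq fun _ ↦ rfl
  exact fun x hx ↦ mem_algCl.2 ((Algebra.IsAlgebraic.isAlgebraic (⟨x, hx⟩ : E)).algebraMap (A := K))

namespace DiffFieldSystem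

variable {K : Type u} [Field K] {σ : K ≃+* K} {V : Type v} [Fintype V] [DecidableEq V]
  {A : Subfield K} (𝒮 : DiffFieldSystem σ V A)

/-- The compositum `∏_{v ∈ J} S(v)` of the fields of the system indexed by `J`. -/
def compositum (J : Set (Finset V)) : Subfield K :=
  ⨆ v ∈ J, 𝒮.S v

/-- The compositum `∏_{v ∈ J} S(v)^{alg}` of the algebraic closures of the fields of the system
indexed by `J`. -/
def algCompositum (J : Set (Finset V)) : Subfield K :=
  ⨆ v ∈ J, algCl (𝒮.S v)

variable {𝒮} {I J : Set (Finset V)} {v w : Finset V}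

theorem S_le_compositum (hv : v ∈ J) : 𝒮.S v ≤ 𝒮.compositum J :=
  le_iSup₂_of_le v hv le_rfl

theorem compositum_mono (h : I ⊆ J) : 𝒮.compositum I ≤ 𝒮.compositum J :=
  biSup_mono h

theorem algCompositum_mono (h : I ⊆ J) : 𝒮.algCompositum I ≤ 𝒮.algCompositum J :=
  biSup_mono h

variable (𝒮)

theorem compositum_lowerClosure_inf_Iic (I : Set (Finset V)) (u : Finset V) :
    𝒮.compositum ↑(lowerClosure I ⊓ .Iic u) = ⨆ v ∈ interFamily I u, 𝒮.S v := by
  refine le_antisymm (iSup₂_le ?_) (iSup₂_le ?_)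
  · rintro v ⟨⟨t, ht, hvt⟩, hvu⟩
    exact le_iSup₂_of_le (t ∩ u) ⟨t, ht, rfl⟩ (𝒮.mono (Finset.subset_inter hvt hvu))
  · rintro _ ⟨v, hv, rfl⟩
    exact S_le_compositum ⟨⟨v, hv, Finset.inter_subset_left⟩, Finset.inter_subset_right⟩

theorem compositum_le_algCompositum (J : Set (Finset V)) : 𝒮.compositum J ≤ 𝒮.algCompositum J :=
  iSup₂_mono fun v _ ↦ le_algCl (𝒮.S v)

theorem base_le (v : Finset V) : A ≤ 𝒮.S v :=
  𝒮.empty_eq.ge.trans (𝒮.mono (Finset.empty_subset v))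

theorem Sminus_le (w : Finset V) : 𝒮.Sminus w ≤ 𝒮.S w :=
  iSup₂_le fun _ ht ↦ 𝒮.mono (Finset.mem_powerset.1 (Finset.mem_of_mem_erase ht))

theorem S_le_algCl_sup_singletons (v : Finset V) : 𝒮.S v ≤ algCl (A ⊔ ⨆ i ∈ v, 𝒮.S {i}) := by
  induction v using Finset.strongInduction with | H v ih
  rcases Nat.lt_or_ge v.card 2 with hv | hv
  · obtain hv | hv : v.card = 0 ∨ v.card = 1 := by omega
    · obtain rfl := Finset.card_eq_zero.1 hv
      exact 𝒮.empty_eq.le.trans (le_sup_left.trans (le_algCl _))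
    · obtain ⟨i, rfl⟩ := Finset.card_eq_one.1 hv
      rw [Finset.iSup_singleton]
      exact le_sup_right.trans (le_algCl _)
  · refine (𝒮.galois v hv).le_algCl.trans (algCl_le (iSup₂_le fun t ht ↦ ?_))
    obtain ⟨htv, hsub⟩ := Finset.mem_erase.1 ht
    rw [Finset.mem_powerset] at hsub
    exact (ih t (hsub.ssubset_of_ne htv)).trans <|
      algCl_mono (sup_le_sup_left (biSup_mono hsub) A)

theorem S_le_algCl_inter_sup_compl (v w : Finset V) :
    𝒮.S v ≤ algCl (𝒮.S (v ∩ w) ⊔ 𝒮.S wᶜ) := by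
  refine (𝒮.S_le_algCl_sup_singletons v).trans (algCl_mono (sup_le ?_ (iSup₂_le fun i hi ↦ ?_)))
  · exact (𝒮.base_le _).trans le_sup_left
  · by_cases hiw : i ∈ w
    · exact (𝒮.mono (by simp [hi, hiw])).trans le_sup_left
    · exact (𝒮.mono (by simp [hiw])).trans le_sup_right

theorem linearDisjointOver_compl (hA : A.map (σ : K →+* K) = A) (w : Finset V) :
    LinearDisjointOver (algCl A) (algCl (𝒮.S w)) (algCl (𝒮.S wᶜ)) := by
  have hS (v : Finset V) : algCl (𝒮.S v) ≤ algCl (invCl σ ((A ⊔ ⨆ i ∈ v, 𝒮.S {i}) ⊔ A)) :=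
    algCl_le <| (𝒮.S_le_algCl_sup_singletons v).trans <|
      algCl_mono (le_sup_left.trans (le_invCl σ _))
  have h := 𝒮.indep w wᶜ disjoint_compl_right
  rw [IndependentOver, invCl_eq_self hA] at h
  exact h.mono (hS w) (hS wᶜ)

variable [IsAlgClosed K] {𝒮}

theorem linearDisjointOver_iSup_algCl_inter (hA : A.map (σ : K →+* K) = A) (w : Finset V)
    (J : Set (Finset V)) :
    LinearDisjointOver (⨆ v ∈ J, algCl (𝒮.S (v ∩ w))) (algCl (𝒮.S w)) (𝒮.algCompositum J) := by
  rw [algCompositum, iSup_subtype', iSup_subtype']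
  refine (𝒮.linearDisjointOver_compl hA w).iSup_of_le_algCl (algCl_mono (𝒮.base_le w))
    (algCl_mono (𝒮.base_le wᶜ)) ?_ ?_ ?_ ?_ <;> intro v
  · exact algCl_mono (𝒮.base_le _)
  · exact algCl_mono (𝒮.mono Finset.inter_subset_right)
  · exact algCl_mono (𝒮.mono Finset.inter_subset_left)
  · exact algCl_le <| (𝒮.S_le_algCl_inter_sup_compl v w).trans <|
      algCl_mono (sup_le_sup (le_algCl _) (le_algCl _))

theorem Regular.linearDisjointOver_of_minimal (hreg : 𝒮.Regular)
    (hA : A.map (σ : K →+* K) = A) {J : LowerSet (Finset V)} (hw : Minimal (· ∉ J) w)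
    (hw₀ : w ≠ ∅) :
    LinearDisjointOver (𝒮.Sminus w) (𝒮.S w) (𝒮.algCompositum J) := by
  have hinter : ⨆ v ∈ (J : Set (Finset V)), algCl (𝒮.S (v ∩ w)) =
      ⨆ v ∈ w.powerset.erase w, algCl (𝒮.S v) := by
    refine le_antisymm (iSup₂_le fun v hv ↦ le_iSup₂_of_le (v ∩ w) ?_ le_rfl)
      (iSup₂_le fun v hv ↦ ?_)
    · exact Finset.mem_erase.2 ⟨fun h ↦ hw.prop (J.lower (Finset.inter_eq_right.1 h) hv),
        Finset.mem_powerset.2 Finset.inter_subset_right⟩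
    · obtain ⟨hvw, hsub⟩ := Finset.mem_erase.1 hv
      rw [Finset.mem_powerset] at hsub
      have hvJ : v ∈ J := not_not.1 (hw.not_prop_of_lt (hsub.ssubset_of_ne hvw))
      exact le_iSup₂_of_le v hvJ (algCl_mono (𝒮.mono (Finset.subset_inter le_rfl hsub)))
  have hlocal := hreg w hw₀
  have hglobal := linearDisjointOver_iSup_algCl_inter (𝒮 := 𝒮) hA w J
  rw [hinter] at hglobal
  have hSminus : 𝒮.Sminus w ≤ ⨆ v ∈ w.powerset.erase w, algCl (𝒮.S v) :=
    iSup₂_mono fun v _ ↦ le_algCl _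
  have hle : ⨆ v ∈ w.powerset.erase w, algCl (𝒮.S v) ≤ algCl (𝒮.S w) := iSup₂_le fun v hv ↦
    algCl_mono (𝒮.mono (Finset.mem_powerset.1 (Finset.mem_of_mem_erase hv)))
  have hle' : ⨆ v ∈ w.powerset.erase w, algCl (𝒮.S v) ≤ 𝒮.algCompositum J :=
    hinter.symm.le.trans (iSup₂_mono fun v _ ↦ algCl_mono (𝒮.mono Finset.inter_subset_left))
  exact hlocal.trans hSminus (𝒮.Sminus_le w) hle'
    (hglobal.mono (sup_le (le_algCl _) hle) le_rfl)

theorem Regular.linearDisjointOver_sup_Iic (hreg : 𝒮.Regular) (hA : A.map (σ : K →+* K) = A)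
    {I J : LowerSet (Finset V)} (hIJ : I ≤ J) (hwI : Minimal (· ∉ I) w) (hwJ : w ∉ J)
    (hw₀ : w ≠ ∅) :
    LinearDisjointOver (𝒮.compositum I) (𝒮.compositum ↑(I ⊔ .Iic w)) (𝒮.algCompositum J) := by
  have hw : Minimal (· ∉ J) w := ⟨hwJ, fun v hv hvw ↦ hwI.le_of_le (fun hvI ↦ hv (hIJ hvI)) hvw⟩
  have hSminus : 𝒮.Sminus w ≤ 𝒮.compositum I := iSup₂_le fun v hv ↦ S_le_compositum <|
    not_not.1 <| hwI.not_prop_of_lt <|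
      (Finset.mem_powerset.1 (Finset.mem_of_mem_erase hv)).ssubset_of_ne (Finset.ne_of_mem_erase hv)
  have hsup : 𝒮.compositum ↑(I ⊔ .Iic w) ≤ 𝒮.S w ⊔ 𝒮.compositum I := by
    refine iSup₂_le fun v hv ↦ ?_
    rcases hv with hv | hv
    · exact (S_le_compositum hv).trans le_sup_right
    · exact (𝒮.mono hv).trans le_sup_left
  have hIJ' : 𝒮.compositum I ≤ 𝒮.algCompositum J :=
    (compositum_mono hIJ).trans (𝒮.compositum_le_algCompositum J)
  exact ((hreg.linearDisjointOver_of_minimal hA hw hw₀).sup_of_le (𝒮.Sminus_le w)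
    hSminus hIJ').mono hsup le_rfl

theorem Regular.linearDisjointOver_lowerSet (hreg : 𝒮.Regular) (hA : A.map (σ : K →+* K) = A)
    (I J : LowerSet (Finset V)) :
    LinearDisjointOver (𝒮.compositum ↑(I ⊓ J)) (𝒮.compositum J) (𝒮.algCompositum I) := by
  rcases eq_or_ne I ⊥ with rfl | hI
  · refine (LinearDisjointOver.of_le_base ?_).symm
    simp [algCompositum]
  induction J using WellFoundedLT.induction with | ind J ih
  by_cases hJI : J ≤ I
  · rw [inf_eq_right.2 hJI]
    exact .of_le_base le_rfl
  obtain ⟨w, ⟨hwJ, hwI⟩, hmax⟩ :=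
    Set.Finite.exists_maximal (Set.toFinite ((J : Set (Finset V)) \ I)) (Set.sdiff_nonempty.2 hJI)
  have hw₀ : w ≠ ∅ := fun h ↦
    hwI (h ▸ I.lower.bot_mem.2 (LowerSet.coe_nonempty.2 hI))
  have hJ : J.erase w ⊔ .Iic w = J :=
    LowerSet.erase_sup_Iic hwJ fun v hv hwv ↦
      (hmax ⟨hv, fun hvI ↦ hwI (I.lower hwv hvI)⟩ hwv).antisymm hwv
  have hIJ : I ⊓ J.erase w = I ⊓ J :=
    le_antisymm (inf_le_inf_left I LowerSet.erase_le) fun v hv ↦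
      ⟨hv.1, hv.2, fun hwv ↦ hwI (I.lower hwv hv.1)⟩
  have hw : Minimal (· ∉ J.erase w) w :=
    ⟨fun h ↦ h.2 (UpperSet.mem_Ici_iff.2 le_rfl),
      fun v hv hvw ↦ not_not.1 fun h ↦ hv ⟨J.lower hvw hwJ, h⟩⟩
  have hwIJ : w ∉ I ⊔ J.erase w := fun h ↦ h.elim hwI hw.prop
  have hstep := hreg.linearDisjointOver_sup_Iic hA le_sup_right hw hwIJ hw₀
  have hIH := ih (J.erase w) (LowerSet.erase_lt.2 hwJ)
  rw [hJ] at hstep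
  rw [hIJ] at hIH
  have hsup : 𝒮.algCompositum I ⊔ 𝒮.compositum ↑(J.erase w) ≤
      𝒮.algCompositum ↑(I ⊔ J.erase w) :=
    sup_le (algCompositum_mono le_sup_left) <|
      (𝒮.compositum_le_algCompositum _).trans (algCompositum_mono le_sup_right)
  exact (hIH.symm.trans (compositum_mono (hIJ.symm.le.trans inf_le_right))
    ((compositum_mono inf_le_left).trans (𝒮.compositum_le_algCompositum I))
    (compositum_mono LowerSet.erase_le) (hstep.mono le_rfl hsup).symm).symm

end DiffFieldSystem

/-- (Third linear disjointness lemma for regular systems.) If `𝒮`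
is a regular system of difference fields on `V` over `A`, `u ⊆ V` and `I` is
any collection of subsets of `V`, then `S(u)` is linearly disjoint from
`∏_{v ∈ I} S(v)^{alg}` over `∏_{v ∈ I_u} S(v)`. -/
theorem regular_third_linear_disjointness
    {K : Type*} [Field K] [IsAlgClosed K] (σ : K ≃+* K)
    {V : Type*} [Fintype V] [DecidableEq V]
    (A : Subfield K) (hAperf : PerfectField A) (hAinv : A.map (σ : K →+* K) = A)
    (𝒮 : DiffFieldSystem σ V A) (hreg : 𝒮.Regular)
    (u : Finset V) (I : Set (Finset V)) :
    LinearDisjointOver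
      (⨆ v ∈ interFamily I u, 𝒮.S v)
      (𝒮.S u)
      (⨆ v ∈ I, algCl (𝒮.S v)) := by
  rw [← DiffFieldSystem.compositum_lowerClosure_inf_Iic]
  refine (hreg.linearDisjointOver_lowerSet hAinv (lowerClosure I) (.Iic u)).mono ?_ ?_
  · exact DiffFieldSystem.S_le_compositum (LowerSet.mem_Iic_iff.2 le_rfl)
  · exact DiffFieldSystem.algCompositum_mono subset_lowerClosure
end

section
/- Let n ≥ 2 and let X₁, …, X_n be finite nonempty sets; write X = ∏ᵢ Xᵢ. Let f : X → ℝ be any function and, for every nonempty proper subset v of {1,…,n}, let W_v be a subset of ∏_{i∈v} Xᵢ. For x⁰, x¹ ∈ X and ι ∈ {0,1}ⁿ let x^ι ∈ X be the point with i-th coordinate (x^{ι(i)})ᵢ. Then ( ∑_{x ∈ X with x|_v ∈ W_v for all nonempty proper v} f(x) )^{2ⁿ} ≤ ( ∏ᵢ |Xᵢ| )^{2ⁿ−2} · ∑_{x⁰, x¹ ∈ X} ∏_{ι ∈ {0,1}ⁿ} f(x^ι). (The inductive inequality, in the case of Cartesian products, established in the proof of the proposition that quasirandomness implies edge-uniformity;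 the right-hand sum is the 2ⁿ-th power of the Gowers box norm of f and is automatically nonnegative.) -/
/-!
The proof is by induction on the number of coordinates, the indicator function of the chain set
being relaxed to a product of bounded weights, the `i`-th of which does not depend on the `i`-th
coordinate. The weight missing the first coordinate can be pulled out of the sum over that
coordinate, and Cauchy–Schwarz in the other coordinates removes it at the cost of doubling the
first one. For each pair `(a, b)` of values of the doubled coordinate, the summand is again of the
original form, with `f` replaced by `y ↦ f (a, y) * f (b, y)` and likewise for the remaining
weights, so the induction hypothesis applies; the power mean inequality over `(a, b)` recombines
the resulting bounds.

A chain set carries such weights because every proper subset `v` misses some coordinate `i`, so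
the conditions it imposes can be distributed among sets which ignore one coordinate each.
-/

section BoxSum

variable {ι R : Type*} {X : ι → Type*}

/-- The point `x^ω` whose `i`-th coordinate is that of `x₁` if `ω i` holds and that of `x₀`
otherwise; the words `ω` index the vertices of the box spanned by `x₀` and `x₁`. -/
def mixedPoint (x₀ x₁ : ∀ i, X i) (ω : ι → Bool) : ∀ i, X i :=
  fun i => if ω i then x₁ i else x₀ i

/-- The unnormalised `2 ^ |ι|`-th power of the Gowers box norm of `f`, summed over all boxes
including the degenerate ones. -/
def boxSum [Fintype ι] [DecidableEq ι] [∀ i, Fintype (X i)] [CommSemiring R]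
    (f : (∀ i, X i) → R) : R :=
  ∑ x₀, ∑ x₁, ∏ ω, f (mixedPoint x₀ x₁ ω)

end BoxSum

section Slices

variable {n : ℕ} {X : Fin (n + 1) → Type*} {R : Type*}

/-- The product of the slices of `f` at the values `a` and `b` of the first coordinate: the
multiplicative analogue of a difference in that direction. -/
def sliceMul [Mul R] (f : (∀ i, X i) → R) (a b : X 0) (y : ∀ i : Fin n, X i.succ) : R :=
  f (Fin.cons a y) * f (Fin.cons b y)

@[to_additive]
theorem prod_pi_fin_succ {M : Type*} [CommMonoid M] [∀ i, Fintype (X i)]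
    (F : (∀ i, X i) → M) :
    ∏ x, F x = ∏ a : X 0, ∏ y : ∀ i : Fin n, X i.succ, F (Fin.cons a y) := by
  rw [← (Fin.consEquiv X).prod_comp, Fintype.prod_prod_type]
  rfl

theorem mixedPoint_cons (a b : X 0) (y z : ∀ i : Fin n, X i.succ) (c : Bool) (ω : Fin n → Bool) :
    mixedPoint (Fin.cons a y) (Fin.cons b z) (Fin.cons c ω : Fin (n + 1) → Bool) =
      (Fin.cons (if c then b else a) (mixedPoint y z ω) : ∀ i, X i) := by
  funext i
  cases i using Fin.cases <;> simp [mixedPoint]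

theorem boxSum_fin_succ [∀ i, Fintype (X i)] [CommSemiring R] (f : (∀ i, X i) → R) :
    boxSum f = ∑ a, ∑ b, boxSum (sliceMul f a b) := by
  have prod_vertices (a b : X 0) (y z : ∀ i : Fin n, X i.succ) :
      ∏ ω, f (mixedPoint (Fin.cons a y) (Fin.cons b z) ω) =
        ∏ ω, sliceMul f a b (mixedPoint y z ω) := by
    simp only [prod_pi_fin_succ, mixedPoint_cons, Fintype.prod_bool, sliceMul,
      Finset.prod_mul_distrib, if_true, Bool.false_eq_true, if_false, mul_comm]
  simp only [boxSum, sum_pi_fin_succ, prod_vertices]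
  exact Finset.sum_congr rfl fun a _ => Finset.sum_comm

variable {β : Type*} {F : (∀ i, X i) → β}

theorem dependsOn_cons_eq (hF : DependsOn F {0}ᶜ) (a b : X 0) (y : ∀ i : Fin n, X i.succ) :
    F (Fin.cons a y) = F (Fin.cons b y) := by
  refine hF fun j hj => ?_
  cases j using Fin.cases with
  | zero => exact absurd rfl hj
  | succ j => simp

theorem dependsOn_comp_cons {i : Fin n} (hF : DependsOn F {i.succ}ᶜ) (a : X 0) :
    DependsOn (fun y : ∀ i : Fin n, X i.succ => F (Fin.cons a y)) {i}ᶜ := by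
  intro y z hyz
  refine hF fun j hj => ?_
  cases j using Fin.cases with
  | zero => simp
  | succ j => simpa using hyz j fun h => hj (congrArg Fin.succ h)

theorem dependsOn_sliceMul [Mul R] {g : (∀ i, X i) → R} {i : Fin n}
    (hg : DependsOn g {i.succ}ᶜ) (a b : X 0) : DependsOn (sliceMul g a b) {i}ᶜ :=
  fun _ _ hyz =>
    congrArg₂ (· * ·) (dependsOn_comp_cons hg a hyz) (dependsOn_comp_cons hg b hyz)

end Slices

section Inequalities

variable {R : Type*} [CommRing R] [LinearOrder R] [IsStrictOrderedRing R]

theorem card_mul_sum_pow_two_pow_le {α : Type*} [Fintype α] (a : α → R) (k : ℕ) :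
    (Fintype.card α : R) * (∑ x, a x) ^ 2 ^ k ≤
      (Fintype.card α : R) ^ 2 ^ k * ∑ x, a x ^ 2 ^ k := by
  induction k generalizing a with
  | zero => simp
  | succ k ih =>
    simp only [pow_succ' 2 k, pow_mul _ 2]
    set C : R := (Fintype.card α : R)
    have : 0 ≤ C := Nat.cast_nonneg _
    calc C * ((∑ x, a x) ^ 2) ^ 2 ^ k
        ≤ C * (C * ∑ x, a x ^ 2) ^ 2 ^ k := by gcongr; exact sq_sum_le_card_mul_sum_sq
      _ = C ^ 2 ^ k * (C * (∑ x, a x ^ 2) ^ 2 ^ k) := by ring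
      _ ≤ C ^ 2 ^ k * (C ^ 2 ^ k * ∑ x, (a x ^ 2) ^ 2 ^ k) :=
        mul_le_mul_of_nonneg_left (ih _) (by positivity)
      _ = (C ^ 2) ^ 2 ^ k * ∑ x, (a x ^ 2) ^ 2 ^ k := by ring

theorem sq_sum_mul_sum_le {α β : Type*} [Fintype α] [Fintype β] {w : β → R}
    (hw : ∀ y, |w y| ≤ 1) (F : α → β → R) :
    (∑ y, w y * ∑ a, F a y) ^ 2 ≤ Fintype.card β * ∑ a, ∑ b, ∑ y, F a y * F b y := by
  have sum_sq_weight_le : ∑ y, w y ^ 2 ≤ Fintype.card β := by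
    simpa using Finset.sum_le_card_nsmul Finset.univ _ 1
      fun y _ => (sq_le_one_iff_abs_le_one _).2 (hw y)
  have sum_sq_eq : ∑ y, (∑ a, F a y) ^ 2 = ∑ a, ∑ b, ∑ y, F a y * F b y := by
    simp only [sq, Finset.sum_mul_sum]
    rw [Finset.sum_comm]
    exact Finset.sum_congr rfl fun a _ => Finset.sum_comm
  calc (∑ y, w y * ∑ a, F a y) ^ 2
      ≤ (∑ y, w y ^ 2) * ∑ y, (∑ a, F a y) ^ 2 := Finset.sum_mul_sq_le_sq_mul_sq _ _ _
    _ ≤ Fintype.card β * ∑ y, (∑ a, F a y) ^ 2 := by gcongr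
    _ = Fintype.card β * ∑ a, ∑ b, ∑ y, F a y * F b y := by rw [sum_sq_eq]

theorem abs_sliceMul_le_one {n : ℕ} {X : Fin (n + 1) → Type*} {g : (∀ i, X i) → R}
    (hg : ∀ x, |g x| ≤ 1) (a b : X 0) (y : ∀ i : Fin n, X i.succ) : |sliceMul g a b y| ≤ 1 := by
  rw [sliceMul, abs_mul]
  exact mul_le_one₀ (hg _) (abs_nonneg _) (hg _)

theorem sq_sum_mul_prod_le {n : ℕ} {X : Fin (n + 1) → Type*} [∀ i, Fintype (X i)]
    (f : (∀ i, X i) → R) {g : Fin (n + 1) → (∀ i, X i) → R} (hg : ∀ x, |g 0 x| ≤ 1)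
    (hdep : DependsOn (g 0) {0}ᶜ) :
    (∑ x, f x * ∏ i, g i x) ^ 2 ≤ (∏ i : Fin n, (Fintype.card (X i.succ) : R)) *
      ∑ a, ∑ b, ∑ y, sliceMul f a b y * ∏ i : Fin n, sliceMul (g i.succ) a b y := by
  cases isEmpty_or_nonempty (X 0) with
  | inl _ => simp [sum_pi_fin_succ]
  | inr hX =>
    obtain ⟨a₀⟩ := hX
    let F (a : X 0) (y : ∀ i : Fin n, X i.succ) : R :=
      f (Fin.cons a y) * ∏ i : Fin n, g i.succ (Fin.cons a y)
    have sum_eq : ∑ x, f x * ∏ i, g i x = ∑ y, g 0 (Fin.cons a₀ y) * ∑ a, F a y := by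
      rw [sum_pi_fin_succ, Finset.sum_comm]
      refine Finset.sum_congr rfl fun y _ => ?_
      rw [Finset.mul_sum]
      refine Finset.sum_congr rfl fun a _ => ?_
      rw [Fin.prod_univ_succ, dependsOn_cons_eq hdep a a₀, mul_left_comm]
    have mul_eq (a b : X 0) (y : ∀ i : Fin n, X i.succ) :
        F a y * F b y = sliceMul f a b y * ∏ i : Fin n, sliceMul (g i.succ) a b y := by
      simp only [F, sliceMul, Finset.prod_mul_distrib, mul_mul_mul_comm]
    have card_eq : (Fintype.card (∀ i : Fin n, X i.succ) : R) =
        ∏ i : Fin n, (Fintype.card (X i.succ) : R) := by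
      rw [Fintype.card_pi, Nat.cast_prod]
    simpa only [sum_eq, mul_eq, card_eq] using sq_sum_mul_sum_le (fun y => hg (Fin.cons a₀ y)) F

-- The factor `(∏ i, |X i|) ^ 2` on the left avoids the exponent `2 ^ n - 2`, which truncates at
-- `n = 0`, where the induction starts.
theorem sq_prod_card_mul_sum_mul_prod_pow_le (n : ℕ) {X : Fin n → Type*} [∀ i, Fintype (X i)]
    (f : (∀ i, X i) → R) {g : Fin n → (∀ i, X i) → R} (hg : ∀ i x, |g i x| ≤ 1)
    (hdep : ∀ i, DependsOn (g i) {i}ᶜ) :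
    (∏ i, (Fintype.card (X i) : R)) ^ 2 * (∑ x, f x * ∏ i, g i x) ^ 2 ^ n ≤
      (∏ i, (Fintype.card (X i) : R)) ^ 2 ^ n * boxSum f := by
  induction n with
  | zero => simp [boxSum, Subsingleton.elim (mixedPoint _ _ _) default]
  | succ n ih =>
    set C : R := (Fintype.card (X 0) : R) with hC_def
    set N : R := ∏ i : Fin n, (Fintype.card (X i.succ) : R) with hN_def
    have : 0 ≤ C := Nat.cast_nonneg _
    have : 0 ≤ N := Finset.prod_nonneg fun i _ => Nat.cast_nonneg _
    let T (p : X 0 × X 0) : R :=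
      ∑ y, sliceMul f p.1 p.2 y * ∏ i : Fin n, sliceMul (g i.succ) p.1 p.2 y
    have cauchy_schwarz : (∑ x, f x * ∏ i, g i x) ^ 2 ≤ N * ∑ p, T p := by
      simpa only [Fintype.sum_prod_type] using sq_sum_mul_prod_le f (hg 0) (hdep 0)
    have power_mean : C ^ 2 * (∑ p, T p) ^ 2 ^ n ≤ (C ^ 2) ^ 2 ^ n * ∑ p, T p ^ 2 ^ n := by
      simpa only [Fintype.card_prod, ← sq, Nat.cast_pow] using card_mul_sum_pow_two_pow_le T n
    have inductive_bound (p : X 0 × X 0) :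
        N ^ 2 * T p ^ 2 ^ n ≤ N ^ 2 ^ n * boxSum (sliceMul f p.1 p.2) :=
      ih _ (fun i => abs_sliceMul_le_one (hg i.succ) _ _)
        fun i => dependsOn_sliceMul (hdep i.succ) _ _
    rw [Fin.prod_univ_succ, ← hC_def, ← hN_def, pow_succ' 2 n, pow_mul _ 2]
    calc (C * N) ^ 2 * ((∑ x, f x * ∏ i, g i x) ^ 2) ^ 2 ^ n
        ≤ (C * N) ^ 2 * (N * ∑ p, T p) ^ 2 ^ n := by gcongr
      _ = N ^ 2 * N ^ 2 ^ n * (C ^ 2 * (∑ p, T p) ^ 2 ^ n) := by ring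
      _ ≤ N ^ 2 * N ^ 2 ^ n * ((C ^ 2) ^ 2 ^ n * ∑ p, T p ^ 2 ^ n) := by gcongr
      _ = N ^ 2 ^ n * (C ^ 2) ^ 2 ^ n * ∑ p, N ^ 2 * T p ^ 2 ^ n := by
        rw [← Finset.mul_sum]; ring
      _ ≤ N ^ 2 ^ n * (C ^ 2) ^ 2 ^ n *
            ∑ p : X 0 × X 0, N ^ 2 ^ n * boxSum (sliceMul f p.1 p.2) :=
        mul_le_mul_of_nonneg_left (Finset.sum_le_sum fun p _ => inductive_bound p) (by positivity)
      _ = (C * N) ^ (2 * 2 ^ n) * boxSum f := by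
        rw [← Finset.mul_sum, Fintype.sum_prod_type, ← boxSum_fin_succ]; ring

end Inequalities

section ChainSets

variable {ι : Type*} {X : ι → Type*}

/-- The chain set cut out by the family `W`. Only the values of `W` at nonempty proper subsets
matter, the others being junk. -/
def chainSet [Fintype ι] (W : (v : Finset ι) → Set (∀ i : v, X i)) : Set (∀ i, X i) :=
  {x | ∀ v : Finset ι, v.Nonempty → v ≠ Finset.univ → v.restrict x ∈ W v}

/-- The points satisfying those constraints of the chain set of `W` which ignore the `i`-th
coordinate. -/
def chainSetAvoiding (W : (v : Finset ι) → Set (∀ i : v, X i)) (i : ι) : Set (∀ i, X i) :=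
  {x | ∀ v : Finset ι, v.Nonempty → i ∉ v → v.restrict x ∈ W v}

theorem chainSet_eq_iInter [Fintype ι] (W : (v : Finset ι) → Set (∀ i : v, X i)) :
    chainSet W = ⋂ i, chainSetAvoiding W i := by
  ext x
  simp only [chainSet, chainSetAvoiding, Set.mem_iInter, Set.mem_ofPred_eq, Ne,
    Finset.eq_univ_iff_forall, not_forall, forall_exists_index]
  exact ⟨fun h i v hv hi => h v hv i hi, fun h v hv i hi => h i v hv hi⟩

theorem dependsOn_mem_chainSetAvoiding (W : (v : Finset ι) → Set (∀ i : v, X i)) (i : ι) :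
    DependsOn (· ∈ chainSetAvoiding W i) {i}ᶜ := by
  intro x y hxy
  refine forall_congr fun v => forall_congr fun _ => forall_congr fun hi => ?_
  have restrict_eq : v.restrict x = v.restrict y :=
    funext fun j => hxy j fun hj => hi (hj ▸ j.2)
  rw [restrict_eq]

theorem indicator_iInter_eq_mul_prod {α M : Type*} [CommMonoidWithZero M] [Fintype ι]
    (s : ι → Set α) (f : α → M) (x : α) :
    (⋂ i, s i).indicator f x = f x * ∏ i, (s i).indicator 1 x := by
  classical
  simp [Set.indicator_apply, Fintype.prod_boole]

end ChainSets

theorem chain_sum_le_box_norm_general {R : Type*} [CommRing R] [LinearOrder R]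
    [IsStrictOrderedRing R] {n : ℕ} (hn : 1 ≤ n) {X : Fin n → Type*} [∀ i, Fintype (X i)]
    (f : (∀ i, X i) → R) (W : (v : Finset (Fin n)) → Set (∀ i : v, X i)) :
    (∑ x, (chainSet W).indicator f x) ^ 2 ^ n ≤
      (∏ i, (Fintype.card (X i) : R)) ^ (2 ^ n - 2) * boxSum f := by
  cases isEmpty_or_nonempty (∀ i, X i) with
  | inl _ => simp [boxSum]
  | inr hX =>
    have card_pos : 0 < ∏ i, (Fintype.card (X i) : R) :=
      Finset.prod_pos fun i _ => Nat.cast_pos.2 (Fintype.card_pos_iff.2 (hX.map (· i)))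
    have two_le : 2 ≤ 2 ^ n := le_self_pow₀ one_le_two (by lia)
    have weighted := sq_prod_card_mul_sum_mul_prod_pow_le n f
      (g := fun i => (chainSetAvoiding W i).indicator 1) ?_ ?_
    · simp only [← indicator_iInter_eq_mul_prod, ← chainSet_eq_iInter] at weighted
      refine le_of_mul_le_mul_left ?_ (pow_pos card_pos 2)
      rwa [← mul_assoc, ← pow_add, Nat.add_sub_cancel' two_le]
    · intro i x
      by_cases hx : x ∈ chainSetAvoiding W i <;> simp [hx]
    · intro i x y hxy
      classical
      simp only [Set.indicator_apply, dependsOn_mem_chainSetAvoiding W i hxy, Pi.one_apply]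

/-- the inductive Cauchy–Schwarz inequality (Cartesian-product
case) from the proof that quasirandomness implies edge-uniformity: the `2ⁿ`-th
power of the sum of `f` over a chain set is at most
`(∏ᵢ|Xᵢ|)^{2ⁿ-2}` times the `2ⁿ`-th power of the Gowers box norm of `f`. -/
theorem chain_sum_le_box_norm (n : ℕ) (hn : 2 ≤ n)
    (X : Fin n → Type*) [∀ i, Fintype (X i)] [∀ i, Nonempty (X i)]
    (f : (∀ i, X i) → ℝ)
    (W : (v : Finset (Fin n)) → Set ((i : {j // j ∈ v}) → X i.1)) :
    (∑ x : ∀ i, X i,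
        ({x : ∀ i, X i | ∀ v : Finset (Fin n), v.Nonempty → v ≠ Finset.univ →
            (fun i : {j // j ∈ v} => x i.1) ∈ W v} : Set (∀ i, X i)).indicator f x)
        ^ (2 ^ n)
      ≤ (∏ i, (Fintype.card (X i) : ℝ)) ^ (2 ^ n - 2) *
        ∑ x0 : ∀ i, X i, ∑ x1 : ∀ i, X i,
          ∏ ι : Fin n → Bool, f (fun i => if ι i then x1 i else x0 i) := by
  exact chain_sum_le_box_norm_general (by lia) f W
end
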